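/- arXiv:1310.8296 — 2 statements merged into one kernel-verified Lean document; each statement's English description precedes it below -/
import Mathlib

section
/- (Solution of the degenerate heat-type equation with time-dependent volatility.) Let T₀ ∈ ℝ and let σ_z : ℝ → ℝ be continuous with σ_z(u) ≠ 0 for all u. For t < T₀ set σ(t)² = ∫_{t}^{T₀} σ_z(u)² du (and σ(t) = √(σ(t)²) > 0). Define, for z > 0 and t < T₀, U(z, t) = 1 + z·N(d̄₁) − N(d̄₂), where d̄₁ = (ln z + σ(t)²/2)/σ(t) and d̄₂ = d̄₁ − σ(t). Then U satisfies ∂U/∂t + (1/2)σ_z(t)² z² ∂²U/∂z² = 0 at every point (z, t) with z > 0 and t < T₀. -/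
/-- The standard normal cumulative distribution function
`N(x) = (2π)^{-1/2} ∫_{-∞}^{x} e^{-u²/2} du`. -/
noncomputable def stdNormalCDF (x : ℝ) : ℝ :=
  (Real.sqrt (2 * Real.pi))⁻¹ * ∫ u in Set.Iic x, Real.exp (-u ^ 2 / 2)

noncomputable def stdPhi (x : ℝ) : ℝ :=
  (Real.sqrt (2 * Real.pi))⁻¹ * Real.exp (-x ^ 2 / 2)

lemma integrable_gauss : MeasureTheory.Integrable (fun u : ℝ => Real.exp (-u ^ 2 / 2)) := by
  have h := integrable_exp_neg_mul_sq (b := 1 / 2) (by norm_num)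
  convert h using 3
  ring

lemma hasDerivAt_stdNormalCDF (x : ℝ) : HasDerivAt stdNormalCDF (stdPhi x) x := by
  have h1 : ∀ y, stdNormalCDF y = (Real.sqrt (2 * Real.pi))⁻¹ *
      ((∫ u in Set.Iic (0:ℝ), Real.exp (-u ^ 2 / 2)) + ∫ u in (0:ℝ)..y, Real.exp (-u ^ 2 / 2)) := by
    intro y
    have := intervalIntegral.integral_Iic_sub_Iic
      (integrable_gauss.integrableOn (s := Set.Iic (0:ℝ)))
      (integrable_gauss.integrableOn (s := Set.Iic y))
    rw [← this]
    unfold stdNormalCDF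
    ring
  have h2 : stdNormalCDF = fun y => (Real.sqrt (2 * Real.pi))⁻¹ *
      ((∫ u in Set.Iic (0:ℝ), Real.exp (-u ^ 2 / 2)) + ∫ u in (0:ℝ)..y, Real.exp (-u ^ 2 / 2)) :=
    funext h1
  have hc : Continuous (fun u : ℝ => Real.exp (-u ^ 2 / 2)) := by fun_prop
  have h3 := intervalIntegral.integral_hasDerivAt_right (hc.intervalIntegrable 0 x)
    hc.stronglyMeasurable.stronglyMeasurableAtFilter hc.continuousAt
  rw [h2]
  exact (h3.const_add _).const_mul _

lemma stdPhi_shift (z r : ℝ) (hz : 0 < z) (hr : 0 < r) :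
    stdPhi ((Real.log z + r ^ 2 / 2) / r - r) = z * stdPhi ((Real.log z + r ^ 2 / 2) / r) := by
  unfold stdPhi
  have : Real.exp (-((Real.log z + r ^ 2 / 2) / r - r) ^ 2 / 2)
      = z * Real.exp (-((Real.log z + r ^ 2 / 2) / r) ^ 2 / 2) := by
    nth_rewrite 2 [← Real.exp_log hz]
    rw [← Real.exp_add]
    congr 1
    field_simp
    ring
  rw [this]
  ring

lemma hasDerivAt_d1 (z r a : ℝ) (hz : 0 < z) :
    HasDerivAt (fun w => (Real.log w + a) / r) (z⁻¹ / r) z :=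
  ((Real.hasDerivAt_log hz.ne').add_const a).div_const r

/-- Solution of the degenerate heat-type equation with time-dependent volatility. -/
theorem time_dependent_vol_solution (T₀ : ℝ)
    (σz : ℝ → ℝ) (hσz : Continuous σz) (hσz0 : ∀ u, σz u ≠ 0)
    (s2 : ℝ → ℝ) (hs2 : ∀ t, s2 t = ∫ u in t..T₀, (σz u) ^ 2)
    (U : ℝ → ℝ → ℝ)
    (hU : ∀ z t : ℝ, 0 < z → t < T₀ →
      U z t = 1
          + z * stdNormalCDF
              ((Real.log z + s2 t / 2) / Real.sqrt (s2 t))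
          - stdNormalCDF
              ((Real.log z + s2 t / 2) / Real.sqrt (s2 t) - Real.sqrt (s2 t))) :
    ∀ z t : ℝ, 0 < z → t < T₀ →
      deriv (fun τ => U z τ) t
          + (1 / 2) * (σz t) ^ 2 * z ^ 2 * deriv (deriv (fun w => U w t)) z = 0 := by
  intro z t hz ht
  have hc2 : Continuous (fun u => (σz u) ^ 2) := by fun_prop
  have hpos : ∀ τ, τ < T₀ → 0 < s2 τ := by
    intro τ hτ
    rw [hs2]
    exact intervalIntegral.intervalIntegral_pos_of_pos (hc2.intervalIntegrable _ _)
      (fun u => by have := hσz0 u; positivity) hτ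
  have hr : 0 < Real.sqrt (s2 t) := Real.sqrt_pos.mpr (hpos t ht)
  have hsq : s2 t = Real.sqrt (s2 t) ^ 2 := (Real.sq_sqrt (hpos t ht).le).symm
  -- first spatial derivative
  have hz1 : ∀ w, 0 < w → deriv (fun w => U w t) w
      = stdNormalCDF ((Real.log w + s2 t / 2) / Real.sqrt (s2 t)) := by
    intro w hw
    have e : (fun w => U w t) =ᶠ[nhds w] fun w => 1
          + w * stdNormalCDF ((Real.log w + s2 t / 2) / Real.sqrt (s2 t))
          - stdNormalCDF
              ((Real.log w + s2 t / 2) / Real.sqrt (s2 t) - Real.sqrt (s2 t)) := by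
      filter_upwards [lt_mem_nhds hw] with v hv using hU v t hv ht
    rw [e.deriv_eq]
    have hd := hasDerivAt_d1 w (Real.sqrt (s2 t)) (s2 t / 2) hw
    have hA := (hasDerivAt_stdNormalCDF _).comp w hd
    have hB := (hasDerivAt_stdNormalCDF _).comp w (hd.sub_const (Real.sqrt (s2 t)))
    have hT := (((hasDerivAt_id w).mul hA).const_add 1).sub hB
    refine hT.deriv.trans ?_
    have hs := stdPhi_shift w (Real.sqrt (s2 t)) hw hr
    rw [← hsq] at hs
    rw [hs]
    simp only [Function.comp, id]
    ring
  have hz2 : deriv (deriv (fun w => U w t)) z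
      = stdPhi ((Real.log z + s2 t / 2) / Real.sqrt (s2 t)) * (z⁻¹ / Real.sqrt (s2 t)) := by
    have e : deriv (fun w => U w t) =ᶠ[nhds z]
        fun w => stdNormalCDF ((Real.log w + s2 t / 2) / Real.sqrt (s2 t)) := by
      filter_upwards [lt_mem_nhds hz] with v hv using hz1 v hv
    rw [e.deriv_eq]
    exact ((hasDerivAt_stdNormalCDF _).comp z
      (hasDerivAt_d1 z (Real.sqrt (s2 t)) (s2 t / 2) hz)).deriv
  -- time derivative
  have hs2d : HasDerivAt s2 (-(σz t) ^ 2) t := by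
    have : s2 = fun t => ∫ u in t..T₀, (σz u) ^ 2 := funext hs2
    rw [this]
    exact intervalIntegral.integral_hasDerivAt_left (hc2.intervalIntegrable t T₀)
      hc2.stronglyMeasurable.stronglyMeasurableAtFilter hc2.continuousAt
  have hrd := hs2d.sqrt (hpos t ht).ne'
  have hdd := ((hs2d.div_const 2).const_add (Real.log z)).div hrd hr.ne'
  have ht1 : deriv (fun τ => U z τ) t
      = z * stdPhi ((Real.log z + s2 t / 2) / Real.sqrt (s2 t))
        * (-(σz t) ^ 2 / (2 * Real.sqrt (s2 t))) := by
    have e : (fun τ => U z τ) =ᶠ[nhds t] fun τ => 1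
          + z * stdNormalCDF ((Real.log z + s2 τ / 2) / Real.sqrt (s2 τ))
          - stdNormalCDF
              ((Real.log z + s2 τ / 2) / Real.sqrt (s2 τ) - Real.sqrt (s2 τ)) := by
      filter_upwards [gt_mem_nhds ht] with v hv using hU z v hz hv
    rw [e.deriv_eq]
    have hA := (hasDerivAt_stdNormalCDF _).comp t hdd
    have hB := (hasDerivAt_stdNormalCDF _).comp t (hdd.sub hrd)
    have hT := ((hA.const_mul z).const_add 1).sub hB
    refine hT.deriv.trans ?_
    have hs := stdPhi_shift z (Real.sqrt (s2 t)) hz hr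
    rw [← hsq] at hs
    simp only [Pi.div_apply, Pi.sub_apply]
    rw [hs]
    ring
  rw [ht1, hz2]
  field_simp
  ring
end

section
/- (Convertible bond price formula verification.) Let σ_S > 0, ρ ∈ ℝ with |ρ| < 1, T₀ ∈ ℝ, let Σ_p : ℝ → ℝ be continuous, and let r : ℝ × (0,∞) → ℝ be an arbitrary function. For t < T₀ set σ(t)² = ∫_{t}^{T₀} [σ_S² + 2ρσ_SΣ_p(u) + Σ_p(u)²] du (which is positive since |ρ| < 1 and σ_S > 0) and σ(t) = √(σ(t)²). Define, for S, p > 0 and t < T₀, V(S, p, t) = p + S·N(d̃₁) − p·N(d̃₂), where d̃₁ = (ln(S/p) + σ(t)²/2)/σ(t) and d̃₂ = d̃₁ − σ(t). Then V satisfies ∂V/∂t + (1/2)[σ_S²S² ∂²V/∂S² − 2ρσ_SΣ_p(t) S p ∂²V/∂S∂p + Σ_p(t)²p² ∂²V/∂p²] + r(t,p)·S ∂V/∂S + r(t,p)·p ∂V/∂p − r(t,p)·V = 0 at every point (S, p, t) with S, p > 0 and t < T₀. -/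
theorem hasDerivAt_stdNormalCDF_s16 (x : ℝ) :
    HasDerivAt stdNormalCDF ((Real.sqrt (2 * Real.pi))⁻¹ * Real.exp (-x ^ 2 / 2)) x := by
  have hint : MeasureTheory.Integrable (fun u : ℝ => Real.exp (-u ^ 2 / 2)) := by
    have := integrable_exp_neg_mul_sq (b := 1 / 2) (by norm_num)
    refine this.congr (Filter.Eventually.of_forall fun u => ?_)
    simp only
    congr 1
    ring
  have hc : Continuous (fun u : ℝ => Real.exp (-u ^ 2 / 2)) := by fun_prop
  have heq : stdNormalCDF = fun y => (Real.sqrt (2 * Real.pi))⁻¹ *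
      ((∫ u in Set.Iic (0 : ℝ), Real.exp (-u ^ 2 / 2)) + ∫ u in (0 : ℝ)..y, Real.exp (-u ^ 2 / 2)) := by
    funext y
    rw [← intervalIntegral.integral_Iic_sub_Iic hint.integrableOn hint.integrableOn]
    simp only [stdNormalCDF]
    ring
  rw [heq]
  exact ((hc.integral_hasStrictDerivAt 0 x).hasDerivAt.const_add _).const_mul _

theorem key_exp (S p v w d : ℝ) (hS : 0 < S) (hp : 0 < p) (hw : 0 < w) (hv : w ^ 2 = v)
    (hd : d = (Real.log (S / p) + v / 2) / w) :
    S * Real.exp (-d ^ 2 / 2) = p * Real.exp (-(d - w) ^ 2 / 2) := by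
  have h1 : d * w = Real.log (S / p) + v / 2 := by
    rw [hd]
    field_simp
  have h2 : -(d - w) ^ 2 / 2 = -d ^ 2 / 2 + Real.log (S / p) := by
    have : Real.log (S / p) = d * w - w ^ 2 / 2 := by rw [h1, hv]; ring
    rw [this]
    ring
  rw [h2, Real.exp_add, Real.exp_log (div_pos hS hp)]
  field_simp

theorem hasDerivAt_dS (S p v w : ℝ) (hS : 0 < S) (hp : 0 < p) :
    HasDerivAt (fun s => (Real.log (s / p) + v / 2) / w) (1 / (S * w)) S := by
  have h := ((((hasDerivAt_id S).div_const p).log (div_pos hS hp).ne').add_const (v / 2)).div_const w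
  refine h.congr_deriv ?_
  simp only [id]
  rw [← div_div]
  congr 1
  field_simp

theorem hasDerivAt_dp (S p v w : ℝ) (hS : 0 < S) (hp : 0 < p) :
    HasDerivAt (fun q => (Real.log (S / q) + v / 2) / w) (-1 / (p * w)) p := by
  have h := ((((hasDerivAt_const p S).div (hasDerivAt_id p) hp.ne').log
    (div_pos hS hp).ne').add_const (v / 2)).div_const w
  refine h.congr_deriv ?_
  simp only [id, Pi.div_apply]
  rw [← div_div]
  congr 1
  field_simp
  ring

/-- Convertible bond price formula verification. -/
theorem convertible_bond_formula_verification (σS ρ T₀ : ℝ)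
    (hσS : 0 < σS) (hρ : |ρ| < 1)
    (Sigp : ℝ → ℝ) (hSigp : Continuous Sigp)
    (r : ℝ → ℝ → ℝ)
    (s2 : ℝ → ℝ)
    (hs2 : ∀ t, s2 t = ∫ u in t..T₀, (σS ^ 2 + 2 * ρ * σS * Sigp u + (Sigp u) ^ 2))
    (V : ℝ → ℝ → ℝ → ℝ)
    (hV : ∀ S p t : ℝ, 0 < S → 0 < p → t < T₀ →
      V S p t = p
          + S * stdNormalCDF
              ((Real.log (S / p) + s2 t / 2) / Real.sqrt (s2 t))
          - p * stdNormalCDF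
              ((Real.log (S / p) + s2 t / 2) / Real.sqrt (s2 t)
                - Real.sqrt (s2 t))) :
    ∀ S p t : ℝ, 0 < S → 0 < p → t < T₀ →
      deriv (fun τ => V S p τ) t
          + (1 / 2) * (σS ^ 2 * S ^ 2 * deriv (deriv (fun s => V s p t)) S
              - 2 * ρ * σS * Sigp t * S * p
                  * deriv (fun s => deriv (fun q => V s q t) p) S
              + (Sigp t) ^ 2 * p ^ 2 * deriv (deriv (fun q => V S q t)) p)
          + r t p * S * deriv (fun s => V s p t) S
          + r t p * p * deriv (fun q => V S q t) p
          - r t p * V S p t = 0 := by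
  intro S p t hS hp ht
  have hcont : Continuous (fun u => σS ^ 2 + 2 * ρ * σS * Sigp u + (Sigp u) ^ 2) := by fun_prop
  have hρ2 : ρ ^ 2 < 1 := by
    rw [← sq_abs]
    nlinarith [abs_nonneg ρ]
  have hpos : ∀ u, 0 < σS ^ 2 + 2 * ρ * σS * Sigp u + (Sigp u) ^ 2 := by
    intro u
    have h1 : 0 < (1 - ρ ^ 2) * σS ^ 2 := mul_pos (by linarith) (by positivity)
    nlinarith [sq_nonneg (Sigp u + ρ * σS)]
  have hs2pos : 0 < s2 t := by
    rw [hs2]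
    exact intervalIntegral.intervalIntegral_pos_of_pos (hcont.intervalIntegrable _ _) hpos ht
  have hs2d : HasDerivAt s2 (-(σS ^ 2 + 2 * ρ * σS * Sigp t + (Sigp t) ^ 2)) t := by
    rw [funext hs2]
    exact intervalIntegral.integral_hasDerivAt_left (hcont.intervalIntegrable _ _)
      (hcont.stronglyMeasurableAtFilter _ _) hcont.continuousAt
  obtain ⟨w, hwdef⟩ : ∃ w, w = Real.sqrt (s2 t) := ⟨_, rfl⟩
  have hw : 0 < w := by rw [hwdef]; exact Real.sqrt_pos.2 hs2pos
  have hw2 : w ^ 2 = s2 t := by rw [hwdef]; exact Real.sq_sqrt hs2pos.le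
  obtain ⟨c, hc⟩ : ∃ c, c = (Real.sqrt (2 * Real.pi))⁻¹ := ⟨_, rfl⟩
  have hN : ∀ x, HasDerivAt stdNormalCDF (c * Real.exp (-x ^ 2 / 2)) x := by
    intro x
    rw [hc]
    exact hasDerivAt_stdNormalCDF_s16 x
  -- first derivative in the stock price
  have hVS : ∀ s q, 0 < s → 0 < q → HasDerivAt (fun x => V x q t)
      (stdNormalCDF ((Real.log (s / q) + s2 t / 2) / w)) s := by
    intro s q hs hq
    have hd := hasDerivAt_dS s q (s2 t) w hs hq
    have h1 := (hN _).comp s hd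
    have h2 := (hN _).comp s (hd.sub_const w)
    have h3 := (((hasDerivAt_id s).mul h1).const_add q).sub (h2.const_mul q)
    have h4 := h3.congr_of_eventuallyEq (f₁ := fun x => V x q t) (by
      filter_upwards [lt_mem_nhds hs] with x hx
      rw [hV x q t hx hq ht, ← hwdef]
      simp)
    refine h4.congr_deriv ?_
    have hk := key_exp s q (s2 t) w _ hs hq hw hw2 rfl
    simp only [id, Function.comp]
    linear_combination c * (1 / (s * w)) * hk
  have hVp : ∀ s q, 0 < s → 0 < q → HasDerivAt (fun x => V s x t)
      (1 - stdNormalCDF ((Real.log (s / q) + s2 t / 2) / w - w)) q := by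
    intro s q hs hq
    have hd := hasDerivAt_dp s q (s2 t) w hs hq
    have h1 := (hN _).comp q hd
    have h2 := (hN _).comp q (hd.sub_const w)
    have h3 := ((hasDerivAt_id q).add (h1.const_mul s)).sub ((hasDerivAt_id q).mul h2)
    have h4 := h3.congr_of_eventuallyEq (f₁ := fun x => V s x t) (by
      filter_upwards [lt_mem_nhds hq] with x hx
      rw [hV s x t hs hx ht, ← hwdef]
      simp)
    refine h4.congr_deriv ?_
    have hk := key_exp s q (s2 t) w _ hs hq hw hw2 rfl
    simp only [id, Function.comp]
    linear_combination c * (-1 / (q * w)) * hk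
  obtain ⟨d, hd⟩ : ∃ d, d = (Real.log (S / p) + s2 t / 2) / w := ⟨_, rfl⟩
  have hk := key_exp S p (s2 t) w d hS hp hw hw2 hd
  have eSS : deriv (deriv (fun s => V s p t)) S = c * Real.exp (-d ^ 2 / 2) * (1 / (S * w)) := by
    have h1 := (hN _).comp S (hasDerivAt_dS S p (s2 t) w hS hp)
    rw [← hd] at h1
    refine (h1.congr_of_eventuallyEq ?_).deriv
    filter_upwards [lt_mem_nhds hS] with x hx
    exact (hVS x p hx hp).deriv
  have epp : deriv (deriv (fun q => V S q t)) p
      = -(c * Real.exp (-(d - w) ^ 2 / 2) * (-1 / (p * w))) := by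
    have h1 := ((hN _).comp p ((hasDerivAt_dp S p (s2 t) w hS hp).sub_const w)).const_sub 1
    rw [← hd] at h1
    refine (h1.congr_of_eventuallyEq ?_).deriv
    filter_upwards [lt_mem_nhds hp] with x hx
    exact (hVp S x hS hx).deriv
  have eSp : deriv (fun s => deriv (fun q => V s q t) p) S
      = -(c * Real.exp (-(d - w) ^ 2 / 2) * (1 / (S * w))) := by
    have h1 := ((hN _).comp S ((hasDerivAt_dS S p (s2 t) w hS hp).sub_const w)).const_sub 1
    rw [← hd] at h1
    refine (h1.congr_of_eventuallyEq ?_).deriv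
    filter_upwards [lt_mem_nhds hS] with x hx
    exact (hVp x p hx hp).deriv
  have et : deriv (fun τ => V S p τ) t = p * (c * Real.exp (-(d - w) ^ 2 / 2)) *
      (-(σS ^ 2 + 2 * ρ * σS * Sigp t + (Sigp t) ^ 2) / (2 * w)) := by
    have hsq := hs2d.sqrt hs2pos.ne'
    have hdt := ((hs2d.div_const 2).const_add (Real.log (S / p))).div hsq
      (by rw [← hwdef]; exact hw.ne')
    obtain ⟨d', hd'⟩ : ∃ d', HasDerivAt
      (fun τ => (Real.log (S / p) + s2 τ / 2) / Real.sqrt (s2 τ)) d' t := ⟨_, hdt⟩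
    have h1 := (hN _).comp t hd'
    have h2 := (hN _).comp t (hd'.sub hsq)
    have h3 := ((h1.const_mul S).const_add p).sub (h2.const_mul p)
    have h4 := h3.congr_of_eventuallyEq (f₁ := fun x => V S p x) (by
      filter_upwards [gt_mem_nhds ht] with x hx
      rw [hV S p x hS hp hx]
      simp)
    rw [h4.deriv]
    simp only [Pi.sub_apply, ← hwdef, ← hd]
    linear_combination c * d' * hk
  rw [eSS, epp, eSp, et, (hVS S p hS hp).deriv, (hVp S p hS hp).deriv, hV S p t hS hp ht,
    ← hwdef, ← hd]
  have hE : Real.exp (-(d - w) ^ 2 / 2) = S * Real.exp (-d ^ 2 / 2) / p := by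
    rw [hk]
    field_simp
  rw [hE]
  field_simp
  ring
end
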